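/- Let q be a prime power, F a finite field with q elements, and let M ⊆ F^q be the set of vectors whose q coordinates are pairwise distinct (injective tuples Fin q → F). Then there exists a set B ⊆ M of cardinality (q−1)! that meets every affine line contained in M in exactly one point. In particular B is a blocking set of M with respect to its lines (B meets every affine line contained in M) and it is minimal: no proper subset of B meets every affine line contained in M. -/

import Mathlib

/-- A line consisting of injective tuples has a constant direction. -/
theorem direction_const_of_line_injective {ι F : Type*} [Field F] {y d : ι → F}
    (h : ∀ t : F, Function.Injective (y + t • d)) (i j : ι) : d i = d j := by
  by_contra hd
  have hd' : d i - d j ≠ 0 := sub_ne_zero.mpr hd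
  have hij : i = j := by
    apply h ((y j - y i) / (d i - d j))
    simp only [Pi.add_apply, Pi.smul_apply, smul_eq_mul]
    field_simp
    ring
  exact hd (congrArg d hij)

/-- An injective tuple is a unique translate, by a constant, of an injective tuple
vanishing at `i₀`. -/
def injectiveEquivProd {ι F : Type*} [AddGroup F] (i₀ : ι) :
    {v : ι → F // Function.Injective v} ≃
      F × {v : ι → F | Function.Injective v ∧ v i₀ = 0} where
  toFun v := (v.1 i₀, ⟨fun i => v.1 i - v.1 i₀,
    fun _ _ h => v.2 (sub_left_injective h), sub_self _⟩)
  invFun p := ⟨fun i => p.2.1 i + p.1, fun _ _ h => p.2.2.1 (add_left_injective p.1 h)⟩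
  left_inv v := by ext i; simp
  right_inv := by
    rintro ⟨t, v, hv, h0⟩
    ext <;> simp [h0]

theorem ncard_injective_apply_eq_zero {ι F : Type*} [Fintype ι] [AddGroup F] [Fintype F]
    (hcard : Fintype.card ι = Fintype.card F) (i₀ : ι) :
    {v : ι → F | Function.Injective v ∧ v i₀ = 0}.ncard = (Fintype.card F - 1).factorial := by
  have h := Nat.card_congr ((Equiv.subtypeInjectiveEquivEmbedding ι F).symm.trans
    (injectiveEquivProd i₀))
  classical
  rw [Nat.card_prod, Nat.card_coe_set_eq, Nat.card_eq_fintype_card, Fintype.card_embedding_eq,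
    hcard, Nat.descFactorial_self, Nat.card_eq_fintype_card,
    ← Nat.mul_factorial_pred Fintype.card_ne_zero] at h
  exact (Nat.eq_of_mul_eq_mul_left Fintype.card_pos h).symm

/-- A line of injective tuples contains exactly one tuple vanishing at `i₀`. -/
theorem existsUnique_mem_line_apply_eq_zero {ι F : Type*} [Field F] (i₀ : ι) {y d : ι → F}
    (hd : d ≠ 0) (h : ∀ t : F, Function.Injective (y + t • d)) :
    ∃! p, p ∈ {v : ι → F | Function.Injective v ∧ v i₀ = 0} ∩
      {z : ι → F | ∃ t : F, z = y + t • d} := by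
  have h0 : d i₀ ≠ 0 := fun h0 =>
    hd (funext fun i => (direction_const_of_line_injective h i i₀).trans h0)
  refine ⟨y + (-y i₀ / d i₀) • d, ⟨⟨h _, ?_⟩, _, rfl⟩, ?_⟩
  · simp [h0]
  · rintro _ ⟨⟨-, hz⟩, t, rfl⟩
    have ht : t = -y i₀ / d i₀ := by
      rw [eq_div_iff h0]
      exact eq_neg_of_add_eq_zero_right hz
    rw [ht]

/-- Let `M ⊆ F^q` be the set of vectors with pairwise distinct coordinates
(injective tuples `Fin q → F`, where `q = |F|`). Then there is a set `B ⊆ M` of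
cardinality `(q-1)!` meeting every affine line contained in `M` in exactly one point;
in particular `B` is a blocking set of `M` with respect to its lines, and it is minimal:
no proper subset of `B` meets every affine line contained in `M`. -/
theorem braid_complement_has_minimal_blocking
    (q : ℕ) (hq : IsPrimePow q)
    (F : Type) [Field F] [Fintype F] (hF : Fintype.card F = q) :
    ∃ B : Set (Fin q → F),
      B ⊆ {v : Fin q → F | Function.Injective v} ∧
      B.ncard = (q - 1).factorial ∧
      (∀ l : Set (Fin q → F),
        (∃ (y d : Fin q → F), d ≠ 0 ∧ l = {z : Fin q → F | ∃ t : F, z = y + t • d}) →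
        l ⊆ {v : Fin q → F | Function.Injective v} →
          ∃! p, p ∈ B ∩ l) ∧
      (∀ l : Set (Fin q → F),
        (∃ (y d : Fin q → F), d ≠ 0 ∧ l = {z : Fin q → F | ∃ t : F, z = y + t • d}) →
        l ⊆ {v : Fin q → F | Function.Injective v} →
          ∃ p ∈ B, p ∈ l) ∧
      (∀ B' ⊂ B, ¬ ∀ l : Set (Fin q → F),
        (∃ (y d : Fin q → F), d ≠ 0 ∧ l = {z : Fin q → F | ∃ t : F, z = y + t • d}) →
        l ⊆ {v : Fin q → F | Function.Injective v} →
          ∃ p ∈ B', p ∈ l) := by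
  subst hF
  let i₀ : Fin (Fintype.card F) := ⟨0, Fintype.card_pos⟩
  have key : ∀ l : Set (Fin (Fintype.card F) → F),
      (∃ y d : Fin (Fintype.card F) → F, d ≠ 0 ∧ l = {z | ∃ t : F, z = y + t • d}) →
      l ⊆ {v | Function.Injective v} →
        ∃! p, p ∈ {v : Fin (Fintype.card F) → F | Function.Injective v ∧ v i₀ = 0} ∩ l := by
    rintro _ ⟨y, d, hd, rfl⟩ hl
    exact existsUnique_mem_line_apply_eq_zero i₀ hd fun t => hl ⟨t, rfl⟩
  refine ⟨{v | Function.Injective v ∧ v i₀ = 0}, fun v hv => hv.1,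
    ncard_injective_apply_eq_zero (Fintype.card_fin _) i₀, key,
    fun l hl hlM => (key l hl hlM).exists, ?_⟩
  intro B' hB' hblock
  obtain ⟨hsub, p, hp, hpB'⟩ := Set.ssubset_iff_exists.mp hB'
  have hline : ∃ y d : Fin (Fintype.card F) → F, d ≠ 0 ∧
      {z | ∃ t : F, z = p + t • (1 : Fin (Fintype.card F) → F)} = {z | ∃ t : F, z = y + t • d} :=
    ⟨p, 1, fun h => one_ne_zero (congrFun h i₀), rfl⟩
  have hlM : {z | ∃ t : F, z = p + t • (1 : Fin (Fintype.card F) → F)} ⊆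
      {v | Function.Injective v} := by
    rintro _ ⟨t, rfl⟩ i j hij
    exact hp.1 (by simpa using hij)
  obtain ⟨p', hp', hp'l⟩ := hblock _ hline hlM
  have heq : p' = p := (key _ hline hlM).unique ⟨hsub hp', hp'l⟩ ⟨hp, 0, by simp⟩
  exact hpB' (heq ▸ hp')
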